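/- arXiv:2107.02705 — 2 statements merged into one kernel-verified Lean document; each statement's English description precedes it below -/
import Mathlib

section
/- Suppose n ≥ 3, |M| ≥ 2, and M is normal, meaning that for each p ∈ M the n−1 vectors v(i,p), i ≠ p, are R-linearly independent. Let X be the free R-module with basis {x(i,j) : (i,j) ∈ D} and let Λ : X → S be the R-module homomorphism sending x(i,j) to v(i,j) (an epimorphism). Let Y ⊆ X be the R-span of the elements y(i,j,k) = a_k·x(i,j) − a_j·x(i,k) + a_i·x(j,k) for (i,j,k) ∈ E. Then ker Λ = Y; that is, the relations a_k v(i,j) − a_j v(i,k) + a_i v(j,k) = 0 for (i,j,k) ∈ E are defining relations for S on the generators B_M. -/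
/-!
Fix `p ∈ M`. Modulo `Y`, the relation `y(i,j,p)` expresses `a_p • x(i,j)` through the generators
`x(·,p)`, so, as `a_p` is central, `a_p • X ⊆ Y + W_p` with `W_p` the span of the `x(i,p)`, `i ≠ p`.
Normality says that `Λ` is injective on `W_p`; hence `a_p • ker Λ ⊆ Y` by the modular law. Since the
`a_p` with `p ∈ M` generate the unit ideal, `ker Λ ⊆ Y`.

To avoid tracking the order of indices, `x(i,j)` is extended to an alternating family, for which
`y(i,j,k)` is alternating as well.
-/

lemma smul_mem_of_mem_center_of_span_eq_top {R X : Type*} [Semiring R] [AddCommMonoid X]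
    [Module R X] {c : R} (hc : c ∈ Set.center R) {s : Set X} (hs : Submodule.span R s = ⊤)
    {N : Submodule R X} (hN : ∀ g ∈ s, c • g ∈ N) (z : X) : c • z ∈ N := by
  have hz : z ∈ Submodule.span R s := hs ▸ Submodule.mem_top
  induction hz using Submodule.span_induction with
  | mem g hg => exact hN g hg
  | zero => simp
  | add y z _ _ hy hz => rw [smul_add]; exact N.add_mem hy hz
  | smul r z _ hz =>
    have hcomm : c * r = r * c := hc.comm r
    rw [smul_smul, hcomm, mul_smul]
    exact N.smul_mem r hz

lemma ker_eq_of_smul_mem_sup_of_disjoint_ker {R X V : Type*} [Ring R] [AddCommGroup X] [Module R X]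
    [AddCommGroup V] [Module R V] {s : Set R} (hs : Ideal.span s = ⊤)
    {Λ : X →ₗ[R] V} {Y : Submodule R X} (hY : Y ≤ LinearMap.ker Λ)
    (h : ∀ c ∈ s, ∃ W : Submodule R X, Disjoint W (LinearMap.ker Λ) ∧ ∀ z, c • z ∈ Y ⊔ W) :
    LinearMap.ker Λ = Y := by
  refine le_antisymm (fun z hz => Y.mem_of_span_top_of_smul_mem s hs z ?_) hY
  rintro ⟨c, hc⟩
  obtain ⟨W, hdisj, hW⟩ := h c hc
  have modular : (Y ⊔ W) ⊓ LinearMap.ker Λ = Y := by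
    rw [sup_inf_assoc_of_le W hY, hdisj.eq_bot, sup_bot_eq]
  exact modular ▸ Submodule.mem_inf.2 ⟨hW z, Submodule.smul_mem _ c hz⟩

section ThreeTerm

variable {R ι X : Type*} [Ring R] [AddCommGroup X] [Module R X]

/-- The element `y(i,j,k) = a_k x(i,j) − a_j x(i,k) + a_i x(j,k)` attached to a doubly indexed
family `x`. -/
def threeTerm (a : ι → R) (x : ι → ι → X) (i j k : ι) : X :=
  a k • x i j - a j • x i k + a i • x j k

variable (a : ι → R) {x : ι → ι → X}

lemma threeTerm_swap_left (hswap : ∀ i j, x j i = -x i j) (i j k : ι) :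
    threeTerm a x j i k = -threeTerm a x i j k := by
  simp only [threeTerm, hswap i j, smul_neg]
  abel

lemma threeTerm_swap_right (hswap : ∀ i j, x j i = -x i j) (i j k : ι) :
    threeTerm a x i k j = -threeTerm a x i j k := by
  simp only [threeTerm, hswap j k, smul_neg]
  abel

lemma threeTerm_self_left (hself : ∀ i, x i i = 0) (i k : ι) : threeTerm a x i i k = 0 := by
  simp [threeTerm, hself]

lemma threeTerm_self_right (hself : ∀ i, x i i = 0) (i k : ι) : threeTerm a x i k k = 0 := by
  simp [threeTerm, hself]

lemma threeTerm_cross_eq_zero {a : ι → R} (e : ι → X) {i j k : ι} (hij : Commute (a i) (a j))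
    (hik : Commute (a i) (a k)) (hjk : Commute (a j) (a k)) :
    threeTerm a (fun i j => a i • e j - a j • e i) i j k = 0 := by
  simp only [threeTerm, smul_sub, smul_smul, hij.eq, hik.eq, hjk.eq]
  abel

lemma smul_mem_sup_span_of_threeTerm_mem (hself : ∀ i, x i i = 0) {Y : Submodule R X}
    {i j p : ι} (hY : threeTerm a x i j p ∈ Y) :
    a p • x i j ∈ Y ⊔ Submodule.span R (Set.range fun k : {k : ι // k ≠ p} => x k p) := by
  set W := Submodule.span R (Set.range fun k : {k : ι // k ≠ p} => x k p)
  have hW (k : ι) : x k p ∈ W := by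
    by_cases hk : k = p
    · rw [hk, hself]
      exact W.zero_mem
    · exact Submodule.subset_span ⟨⟨k, hk⟩, rfl⟩
  have expand : a p • x i j = threeTerm a x i j p + (a j • x i p - a i • x j p) := by
    simp only [threeTerm]
    abel
  rw [expand]
  exact Submodule.add_mem_sup hY (W.sub_mem (W.smul_mem _ (hW i)) (W.smul_mem _ (hW j)))

end ThreeTerm

lemma sorted_triple_induction {ι : Type*} [LinearOrder ι] {P : ι → ι → ι → Prop}
    (swap_left : ∀ i j k, P i j k → P j i k) (swap_right : ∀ i j k, P i j k → P i k j)
    (sorted : ∀ i j k, i ≤ j → j ≤ k → P i j k) (i j k : ι) : P i j k := by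
  have of_le {i j : ι} (k : ι) (hij : i ≤ j) : P i j k := by
    rcases le_total j k with hjk | hkj
    · exact sorted i j k hij hjk
    rcases le_total i k with hik | hki
    · exact swap_right i k j (sorted i k j hik hkj)
    · exact swap_right i k j (swap_left k i j (sorted k i j hki hij))
  rcases le_total i j with hij | hji
  · exact of_le k hij
  · exact swap_left j i k (of_le k hji)

section OrderedPairs

variable {R ι X : Type*} [Ring R] [LinearOrder ι] [AddCommGroup X] [Module R X]

/-- The index set `D` of the generators: increasing pairs with an entry in `M`. -/
def pairsMeeting (M : Set ι) : Set (ι × ι) :=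
  {q | q.1 < q.2 ∧ (q.1 ∈ M ∨ q.2 ∈ M)}

/-- The submodule `Y` spanned by the `y(i,j,k)` with `(i,j,k) ∈ E`. Only the values of `x` on
`pairsMeeting M` matter. -/
def relationSubmodule (a : ι → R) (M : Set ι) (x : ι × ι → X) : Submodule R X :=
  Submodule.span R {y | ∃ i j k : ι, i < j ∧ j < k ∧
    ((i ∈ M ∧ j ∈ M) ∨ (i ∈ M ∧ k ∈ M) ∨ (j ∈ M ∧ k ∈ M)) ∧
    y = a k • x (i, j) - a j • x (i, k) + a i • x (j, k)}

/-- The alternating family that agrees with `x` on increasing pairs. -/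
def altExtension (x : ι × ι → X) (i j : ι) : X :=
  if i < j then x (i, j) else if j < i then -x (j, i) else 0

variable (x : ι × ι → X)

lemma altExtension_of_lt {i j : ι} (h : i < j) : altExtension x i j = x (i, j) :=
  if_pos h

lemma altExtension_self (i : ι) : altExtension x i i = 0 := by
  simp [altExtension]

lemma altExtension_swap (i j : ι) : altExtension x j i = -altExtension x i j := by
  rcases lt_trichotomy i j with h | rfl | h
  · simp [altExtension, h, h.not_gt]
  · simp [altExtension]
  · simp [altExtension, h, h.not_gt]

variable {x}

lemma threeTerm_altExtension_of_lt (a : ι → R) {i j k : ι} (hij : i < j) (hjk : j < k) :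
    threeTerm a (altExtension x) i j k =
      a k • x (i, j) - a j • x (i, k) + a i • x (j, k) := by
  simp only [threeTerm, altExtension_of_lt x hij, altExtension_of_lt x hjk,
    altExtension_of_lt x (hij.trans hjk)]

lemma threeTerm_altExtension_mem_relationSubmodule (a : ι → R) {M : Set ι} (i j k : ι) :
    (i ∈ M ∧ j ∈ M) ∨ (i ∈ M ∧ k ∈ M) ∨ (j ∈ M ∧ k ∈ M) →
      threeTerm a (altExtension x) i j k ∈ relationSubmodule a M x := by
  induction i, j, k using sorted_triple_induction with
  | swap_left i j k ih =>
    intro hM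
    rw [threeTerm_swap_left a (altExtension_swap x), neg_mem_iff]
    exact ih (by tauto)
  | swap_right i j k ih =>
    intro hM
    rw [threeTerm_swap_right a (altExtension_swap x), neg_mem_iff]
    exact ih (by tauto)
  | sorted i j k hij hjk =>
    intro hM
    rcases hij.eq_or_lt with rfl | hij
    · simp [threeTerm_self_left a (altExtension_self x)]
    rcases hjk.eq_or_lt with rfl | hjk
    · simp [threeTerm_self_right a (altExtension_self x)]
    exact Submodule.subset_span ⟨i, j, k, hij, hjk, hM, threeTerm_altExtension_of_lt a hij hjk⟩

lemma smul_mem_relationSubmodule_sup {a : ι → R} {M : Set ι} {p : ι} (hp : p ∈ M)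
    (hcen : a p ∈ Set.center R) (hx : Submodule.span R (x '' pairsMeeting M) = ⊤) (z : X) :
    a p • z ∈ relationSubmodule a M x ⊔
      Submodule.span R (Set.range fun i : {i : ι // i ≠ p} => altExtension x i p) := by
  refine smul_mem_of_mem_center_of_span_eq_top hcen hx ?_ z
  rintro _ ⟨⟨i, j⟩, ⟨hij, hM⟩, rfl⟩
  rw [← altExtension_of_lt x hij]
  exact smul_mem_sup_span_of_threeTerm_mem a (altExtension_self x)
    (threeTerm_altExtension_mem_relationSubmodule a i j p (by tauto))

end OrderedPairs

section CrossVectors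

variable {R ι X V : Type*} [Ring R] [LinearOrder ι] [AddCommGroup X] [Module R X]
  [AddCommGroup V] [Module R V] {a : ι → R} {e : ι → V} {v : ι → ι → V} {M : Set ι}
  {x : ι × ι → X} {Λ : X →ₗ[R] V}

lemma relationSubmodule_le_ker (hv : ∀ i j, i ≠ j → v i j = a i • e j - a j • e i)
    (hcen : ∀ p ∈ M, a p ∈ Set.center R) (hΛ : ∀ d ∈ pairsMeeting M, Λ (x d) = v d.1 d.2) :
    relationSubmodule a M x ≤ LinearMap.ker Λ := by
  have hcomm {i j : ι} (h : i ∈ M ∨ j ∈ M) : Commute (a i) (a j) :=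
    h.elim (fun hi => (hcen i hi).comm _) fun hj => ((hcen j hj).comm _).symm
  have hΛ_lt {i j : ι} (hij : i < j) (h : i ∈ M ∨ j ∈ M) :
      Λ (x (i, j)) = a i • e j - a j • e i :=
    (hΛ (i, j) ⟨hij, h⟩).trans (hv i j hij.ne)
  refine Submodule.span_le.2 ?_
  rintro _ ⟨i, j, k, hij, hjk, hM, rfl⟩
  have hMij : i ∈ M ∨ j ∈ M := by tauto
  have hMik : i ∈ M ∨ k ∈ M := by tauto
  have hMjk : j ∈ M ∨ k ∈ M := by tauto
  rw [SetLike.mem_coe, LinearMap.mem_ker, map_add, map_sub, map_smul, map_smul, map_smul,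
    hΛ_lt hij hMij, hΛ_lt (hij.trans hjk) hMik, hΛ_lt hjk hMjk]
  exact threeTerm_cross_eq_zero e (hcomm hMij) (hcomm hMik) (hcomm hMjk)

lemma map_altExtension_eq (hv : ∀ i j, i ≠ j → v i j = a i • e j - a j • e i)
    (hΛ : ∀ d ∈ pairsMeeting M, Λ (x d) = v d.1 d.2) {i p : ι} (hp : p ∈ M) (hip : i ≠ p) :
    Λ (altExtension x i p) = v i p := by
  rcases hip.lt_or_gt with h | h
  · rw [altExtension_of_lt x h]
    exact hΛ (i, p) ⟨h, Or.inr hp⟩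
  · rw [altExtension_swap x p i, altExtension_of_lt x h, map_neg, hΛ (p, i) ⟨h, Or.inl hp⟩,
      hv p i hip.symm, hv i p hip, neg_sub]

end CrossVectors

section Coordinates

variable {R : Type*} [Ring R]

lemma ite_eq_smul_single_sub_smul_single {ι : Type*} [DecidableEq ι] (a : ι → R) {i j : ι}
    (hij : i ≠ j) :
    (fun k => if k = i then -a j else if k = j then a i else 0) =
      a i • Pi.single j (1 : R) - a j • Pi.single i (1 : R) := by
  funext k
  rcases eq_or_ne k i with rfl | hki
  · simp [hij]
  · simp [Pi.single_apply, hki]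

lemma span_image_indicator_eq_top {α : Type*} [DecidableEq α] (D : Set α) [Finite D] :
    Submodule.span R ((fun (q : α) (d : D) => if (d : α) = q then (1 : R) else 0) '' D) = ⊤ := by
  rw [Set.image_eq_range, ← (Pi.basisFun R D).span_eq]
  congr 2
  funext q d
  simp [Pi.single_apply, Subtype.ext_iff]

end Coordinates

theorem stmt_1_general {R ι X V : Type*} [Ring R] [LinearOrder ι] [AddCommGroup X] [Module R X]
    [AddCommGroup V] [Module R V] {a : ι → R} {e : ι → V} {v : ι → ι → V}
    (hv : ∀ i j, i ≠ j → v i j = a i • e j - a j • e i) {M : Set ι}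
    (hcen : ∀ p ∈ M, a p ∈ Set.center R) (hM : Ideal.span (a '' M) = ⊤)
    (hnormal : ∀ p ∈ M, LinearIndependent R (fun i : {i : ι // i ≠ p} => v i.1 p))
    {x : ι × ι → X} (hx : Submodule.span R (x '' pairsMeeting M) = ⊤) {Λ : X →ₗ[R] V}
    (hΛ : ∀ d ∈ pairsMeeting M, Λ (x d) = v d.1 d.2) :
    LinearMap.ker Λ = relationSubmodule a M x := by
  refine ker_eq_of_smul_mem_sup_of_disjoint_ker hM (relationSubmodule_le_ker hv hcen hΛ) ?_
  rintro _ ⟨p, hp, rfl⟩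
  refine ⟨_, Submodule.range_ker_disjoint ?_, smul_mem_relationSubmodule_sup hp (hcen p hp) hx⟩
  have hcomp : (Λ ∘ fun i : {i : ι // i ≠ p} => altExtension x i p) = fun i => v i.1 p :=
    funext fun i => map_altExtension_eq hv hΛ hp i.2
  exact hcomp ▸ hnormal p hp

/-- Theorem `rela`: if `M` is normal, the relations
`a_k v(i,j) − a_j v(i,k) + a_i v(j,k) = 0`, for `(i,j,k) ∈ E`, are defining
relations for `S` on the generators `B_M`; i.e. `ker Λ = Y`. -/
theorem stmt_1 {R : Type*} [Ring R] [Nontrivial R]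
    {n : ℕ} (hn : 3 ≤ n) (a : Fin n → R)
    (hcen : ∀ i, a i ∈ Set.center R)
    (huni : Ideal.span (Set.range a) = ⊤)
    (S : Submodule R (Fin n → R))
    (hS : ∀ x, x ∈ S ↔ ∑ i, a i * x i = 0)
    (v : Fin n → Fin n → Fin n → R)
    (hv : ∀ i j k, v i j k = if k = i then -a j else if k = j then a i else 0)
    (M : Finset (Fin n)) (hMcard : 2 ≤ M.card)
    (hM : Ideal.span (a '' (M : Set (Fin n))) = ⊤)
    (hnormal : ∀ p ∈ M, LinearIndependent R (fun i : {i : Fin n // i ≠ p} => v i.1 p))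
    (D : Set (Fin n × Fin n))
    (hD : D = {q | q.1 < q.2 ∧ (q.1 ∈ M ∨ q.2 ∈ M)})
    (Λ : (D → R) →ₗ[R] (Fin n → R))
    (hΛ : ∀ d : D, Λ (fun e => if e = d then 1 else 0) = v (d : Fin n × Fin n).1 (d : Fin n × Fin n).2)
    (Y : Submodule R (D → R))
    (hY : Y = Submodule.span R {y | ∃ i j k : Fin n, i < j ∧ j < k ∧
      ((i ∈ M ∧ j ∈ M) ∨ (i ∈ M ∧ k ∈ M) ∨ (j ∈ M ∧ k ∈ M)) ∧
      y = fun d : D => a k * (if (d : Fin n × Fin n) = (i, j) then 1 else 0)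
        - a j * (if (d : Fin n × Fin n) = (i, k) then 1 else 0)
        + a i * (if (d : Fin n × Fin n) = (j, k) then 1 else 0)}) :
    LinearMap.ker Λ = Y := by
  obtain rfl : D = pairsMeeting (M : Set (Fin n)) := hD
  let x (q : Fin n × Fin n) (d : pairsMeeting (M : Set (Fin n))) : R := if d = q then 1 else 0
  have hYx : Y = relationSubmodule a M x := hY
  have hv' (i j : Fin n) (hij : i ≠ j) :
      v i j = a i • Pi.single j (1 : R) - a j • Pi.single i (1 : R) :=
    (funext (hv i j)).trans (ite_eq_smul_single_sub_smul_single a hij)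
  have hΛx (d) (hd : d ∈ pairsMeeting (M : Set (Fin n))) : Λ (x d) = v d.1 d.2 := by
    simpa only [Subtype.ext_iff] using hΛ ⟨d, hd⟩
  rw [hYx]
  exact stmt_1_general hv' (fun p _ => hcen p) hM hnormal (span_image_indicator_eq_top _) hΛx
end

section
/- Suppose R is a principal ideal domain, a_1 ≠ 0, and n > 2. Set d_i = a_1·(a_1,…,a_{i+1}) / ((a_1,a_{i+1})·(a_1,…,a_i)) for 2 ≤ i ≤ n−1. Then S/U_1 is isomorphic as an R-module to R/Rd_2 ⊕ ⋯ ⊕ R/Rd_{n−1}; moreover, for every prime p of R, the p-elementary divisors of S/U_1 are the p-parts of d_2,…,d_{n−1}. -/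
/-!
Write `A = a 0`. Reducing the terms `a j * x j`, `j ≠ 0`, modulo `A` maps the solutions onto the
kernel of the addition map `⨁ j, a j • (R/A) → R/A`, because `A * x 0` can absorb any multiple
of `A`; the solutions sent to zero are exactly the span of the vectors `u j`.

The kernel of addition is computed by peeling off the last summand. The possible last coordinates
are the elements of `(g) ∩ (a j)` in `R/A`, where `g` is the gcd of `A` and the preceding
coefficients. This is the cyclic module generated by `l = lcm (g, gcd (A, a j))`, and `A / l` is
the number `d` of the theorem, so it is `R/(d)`. It splits off: `g` is a sum of elements of the
preceding submodules, each of them a multiple of `g`, hence `l` lifts to a tuple with the same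
annihilator.
-/

section CyclicSummand

open Submodule

variable {R M N : Type*} [CommRing R] [AddCommGroup M] [Module R M] [AddCommGroup N] [Module R N]

theorem isCompl_span_singleton_ker (f : M →ₗ[R] N) {w : M} (hrange : LinearMap.range f ≤ R ∙ f w)
    (htorsion : Ideal.torsionOf R N (f w) ≤ Ideal.torsionOf R M w) :
    IsCompl (R ∙ w) (LinearMap.ker f) := by
  refine IsCompl.of_le (fun x hx ↦ ?_) fun x _ ↦ ?_
  · obtain ⟨⟨r, rfl⟩, hfx⟩ := by simpa only [mem_inf, mem_span_singleton] using hx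
    exact htorsion (by simpa using hfx)
  · obtain ⟨r, hr⟩ := mem_span_singleton.1 (hrange ⟨x, rfl⟩)
    refine mem_sup.2 ⟨r • w, smul_mem _ r (mem_span_singleton_self w), x - r • w, ?_, by abel⟩
    rw [LinearMap.mem_ker, map_sub, map_smul, hr, sub_self]

theorem nonempty_equiv_quotient_torsionOf_prod_ker (f : M →ₗ[R] N) {w : M}
    (hrange : LinearMap.range f ≤ R ∙ f w)
    (htorsion : Ideal.torsionOf R N (f w) ≤ Ideal.torsionOf R M w) :
    Nonempty (M ≃ₗ[R] (R ⧸ Ideal.torsionOf R N (f w)) × LinearMap.ker f) := by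
  have htorsion_eq : Ideal.torsionOf R N (f w) = Ideal.torsionOf R M w :=
    le_antisymm htorsion fun r hr ↦ by
      rw [Ideal.mem_torsionOf_iff] at hr ⊢
      rw [← map_smul, hr, map_zero]
  rw [htorsion_eq]
  exact ⟨(prodEquivOfIsCompl _ _ (isCompl_span_singleton_ker f hrange htorsion)).symm ≪≫ₗ
    (Ideal.quotTorsionOfEquivSpanSingleton R M w).symm.prodCongr (.refl R _)⟩

end CyclicSummand

section SumKer

open Submodule

variable {R N : Type*} [CommRing R] [AddCommGroup N] [Module R N]

/-- The kernel of the addition map `⨁ i, I i → N`, for finitely many submodules `I i` of `N`,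
realized inside `ι → N`. -/
def sumKer {ι : Type*} [Fintype ι] (I : ι → Submodule R N) : Submodule R (ι → N) :=
  pi Set.univ I ⊓ LinearMap.ker (∑ i, LinearMap.proj i)

theorem mem_sumKer {ι : Type*} [Fintype ι] {I : ι → Submodule R N} {z : ι → N} :
    z ∈ sumKer I ↔ (∀ i, z i ∈ I i) ∧ ∑ i, z i = 0 := by
  simp [sumKer]

variable {n : ℕ}

theorem mem_sumKer_castSucc {I : Fin (n + 1) → Submodule R N} {z : Fin (n + 1) → N} :
    z ∈ sumKer I ↔ ((∀ j : Fin n, z j.castSucc ∈ I j.castSucc) ∧ z (Fin.last n) ∈ I (Fin.last n)) ∧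
      ∑ j : Fin n, z j.castSucc + z (Fin.last n) = 0 := by
  rw [mem_sumKer, Fin.forall_fin_succ', Fin.sum_univ_castSucc]

/-- The last coordinate, as a linear map on `sumKer I`. -/
def sumKerLast (I : Fin (n + 1) → Submodule R N) : sumKer I →ₗ[R] N :=
  LinearMap.proj (Fin.last n) ∘ₗ (sumKer I).subtype

@[simp]
theorem sumKerLast_apply {I : Fin (n + 1) → Submodule R N} (z : sumKer I) :
    sumKerLast I z = z.1 (Fin.last n) := rfl

/-- The kernel of the addition map for the first `n` of `n + 1` submodules, identified by
`Fin.init` and `Fin.snoc` with the tuples whose last entry is zero. -/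
def kerSumKerLastEquiv (I : Fin (n + 1) → Submodule R N) :
    LinearMap.ker (sumKerLast I) ≃ₗ[R] sumKer fun j : Fin n ↦ I j.castSucc where
  toFun z := ⟨Fin.init z.1.1, by
    have hlast : z.1.1 (Fin.last n) = 0 := z.2
    obtain ⟨⟨hmem, -⟩, hsum⟩ := mem_sumKer_castSucc.1 z.1.2
    exact mem_sumKer.2 ⟨hmem, by rwa [hlast, add_zero] at hsum⟩⟩
  invFun y := ⟨⟨Fin.snoc y.1 0, by simpa [mem_sumKer_castSucc] using mem_sumKer.1 y.2⟩, by simp⟩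
  left_inv z := Subtype.ext <| Subtype.ext <| by
    have hlast : z.1.1 (Fin.last n) = 0 := z.2
    simp only [← hlast, Fin.snoc_init_self]
  right_inv y := by simp
  map_add' _ _ := rfl
  map_smul' _ _ := rfl

theorem range_sumKerLast_le (I : Fin (n + 1) → Submodule R N) :
    LinearMap.range (sumKerLast I) ≤ (⨆ j : Fin n, I j.castSucc) ⊓ I (Fin.last n) := by
  rintro _ ⟨⟨z, hz⟩, rfl⟩
  obtain ⟨⟨hmem, hlast⟩, hsum⟩ := mem_sumKer_castSucc.1 hz
  refine ⟨?_, hlast⟩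
  change z (Fin.last n) ∈ ⨆ j : Fin n, I j.castSucc
  rw [eq_neg_of_add_eq_zero_right hsum]
  exact neg_mem (sum_mem fun j _ ↦ mem_iSup_of_mem j (hmem j))

-- With `l = k • g` and `g = ∑ j, y j`, the tuple `(-k • y, l)` works: each `y j` is a multiple of
-- `g`, so whatever kills `k • g` kills `k • y j`.
theorem exists_sumKerLast_eq_and_torsionOf_le (I : Fin (n + 1) → Submodule R N) {g l : N}
    (hg : R ∙ g = ⨆ j : Fin n, I j.castSucc) (hlg : l ∈ R ∙ g) (hlI : l ∈ I (Fin.last n)) :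
    ∃ w : sumKer I, sumKerLast I w = l ∧
      Ideal.torsionOf R N l ≤ Ideal.torsionOf R (sumKer I) w := by
  obtain ⟨k, rfl⟩ := mem_span_singleton.1 hlg
  obtain ⟨y, hsum⟩ : ∃ y : ∀ j : Fin n, I j.castSucc, ∑ j, (y j : N) = g := by
    rw [← mem_iSup_finset_iff_exists_sum]
    simp [← hg]
  refine ⟨⟨Fin.snoc (fun j ↦ -(k • (y j : N))) (k • g),
    mem_sumKer_castSucc.2 ⟨⟨fun j ↦ ?_, ?_⟩, ?_⟩⟩, by simp, fun r hr ↦ ?_⟩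
  · simp [smul_mem]
  · simpa using hlI
  · simp [← Finset.smul_sum, hsum]
  · have hrg : r • k • g = 0 := hr
    have hry (j : Fin n) : r • k • (y j : N) = 0 := by
      obtain ⟨s, hs⟩ := mem_span_singleton.1 (hg ▸ mem_iSup_of_mem j (y j).2 : (y j : N) ∈ R ∙ g)
      rw [← hs, smul_comm k s, smul_comm r s, hrg, smul_zero]
    ext j
    refine Fin.lastCases ?_ (fun j ↦ ?_) j <;> simp [hrg, hry]

theorem nonempty_sumKer_equiv_prod (I : Fin (n + 1) → Submodule R N) {g l : N}
    (hg : R ∙ g = ⨆ j : Fin n, I j.castSucc) (hl : R ∙ l = R ∙ g ⊓ I (Fin.last n)) :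
    Nonempty (sumKer I ≃ₗ[R]
      (R ⧸ Ideal.torsionOf R N l) × sumKer fun j : Fin n ↦ I j.castSucc) := by
  obtain ⟨hlg, hlI⟩ := mem_inf.1 (hl ▸ mem_span_singleton_self l)
  obtain ⟨w, rfl, htorsion⟩ := exists_sumKerLast_eq_and_torsionOf_le I hg hlg hlI
  have hrange := (range_sumKerLast_le I).trans (by rw [← hg, ← hl])
  obtain ⟨e⟩ := nonempty_equiv_quotient_torsionOf_prod_ker (sumKerLast I) hrange htorsion
  exact ⟨e ≪≫ₗ LinearEquiv.prodCongr (.refl R _) (kerSumKerLastEquiv I)⟩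

/-- A dependent product over `Fin (n + 1)` as the product of its last factor and the rest: the
linear form of `Fin.snocEquiv`. -/
def piLastProdInitEquiv (M : Fin (n + 1) → Type*) [∀ i, AddCommGroup (M i)] [∀ i, Module R (M i)] :
    (∀ i, M i) ≃ₗ[R] M (Fin.last n) × (∀ i : Fin n, M i.castSucc) where
  __ := (Fin.snocEquiv M).symm
  map_add' _ _ := rfl
  map_smul' _ _ := rfl

theorem eq_iSup_of_succ_eq_sup {α : Type*} [CompleteLattice α] {I J : Fin (n + 1) → α}
    (hzero : J 0 = I 0) (hsucc : ∀ i : Fin n, J i.succ = J i.castSucc ⊔ I i.succ) :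
    J (Fin.last n) = ⨆ j, I j := by
  induction n with
  | zero => simp [hzero]
  | succ n ih =>
    rw [← Fin.succ_last, hsucc, ih (I := fun j ↦ I j.castSucc) (J := fun j ↦ J j.castSucc) hzero
      fun i ↦ hsucc i.castSucc]
    refine le_antisymm (sup_le (iSup_le fun j ↦ le_iSup I _) (le_iSup I _)) (iSup_le fun j ↦ ?_)
    cases j using Fin.lastCases with
    | last => exact le_sup_right
    | cast j => exact le_sup_of_le_left (le_iSup (fun j ↦ I (Fin.castSucc j)) j)

theorem nonempty_sumKer_equiv_pi (I : Fin (n + 1) → Submodule R N) (g : Fin (n + 1) → N)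
    (l : Fin n → N) (hzero : R ∙ g 0 = I 0)
    (hsucc : ∀ i : Fin n, R ∙ g i.succ = (R ∙ g i.castSucc) ⊔ I i.succ)
    (hl : ∀ i : Fin n, R ∙ l i = R ∙ g i.castSucc ⊓ I i.succ) :
    Nonempty (sumKer I ≃ₗ[R] ∀ i, R ⧸ Ideal.torsionOf R N (l i)) := by
  induction n with
  | zero =>
    have : Subsingleton (sumKer I) := by
      refine (subsingleton_iff_eq_bot).2 ((Submodule.eq_bot_iff _).2 fun z hz ↦ ?_)
      ext j
      simpa [Fin.fin_one_eq_zero j] using (mem_sumKer.1 hz).2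
    exact ⟨0⟩
  | succ n ih =>
    have hg : R ∙ g (Fin.last n).castSucc = ⨆ j : Fin (n + 1), I j.castSucc :=
      eq_iSup_of_succ_eq_sup (J := fun j ↦ R ∙ g (Fin.castSucc j)) hzero fun i ↦ hsucc i.castSucc
    obtain ⟨e⟩ := nonempty_sumKer_equiv_prod I hg (hl (Fin.last n))
    obtain ⟨f⟩ := ih (fun j ↦ I j.castSucc) (fun j ↦ g j.castSucc) (fun i ↦ l i.castSucc) hzero
      (fun i ↦ hsucc i.castSucc) fun i ↦ hl i.castSucc
    exact ⟨e ≪≫ₗ LinearEquiv.prodCongr (.refl R _) f ≪≫ₗ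
      (piLastProdInitEquiv fun i ↦ R ⧸ Ideal.torsionOf R N (l i)).symm⟩

end SumKer

section Gcd

variable {R : Type*} [CommRing R]

theorem dvd_and_dvd_of_span_singleton_eq_span_pair {c x y : R}
    (hc : Ideal.span {c} = Ideal.span {x, y}) : c ∣ x ∧ c ∣ y := by
  simp only [← Ideal.mem_span_singleton, hc]
  exact ⟨Ideal.subset_span (by simp), Ideal.subset_span (by simp)⟩

theorem exists_mul_eq_and_isCoprime [IsDomain R] {c x y : R} (hx : x ≠ 0)
    (hc : Ideal.span {c} = Ideal.span {x, y}) :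
    ∃ α β, c * α = x ∧ c * β = y ∧ IsCoprime α β := by
  obtain ⟨⟨α, rfl⟩, β, rfl⟩ := dvd_and_dvd_of_span_singleton_eq_span_pair hc
  obtain ⟨r, s, hrs⟩ := Ideal.mem_span_pair.1 (hc ▸ Ideal.mem_span_singleton_self c)
  exact ⟨α, β, rfl, rfl, r, s, mul_left_cancel₀ (left_ne_zero_of_mul hx)
    (by linear_combination hrs)⟩

theorem span_mul_eq_inf_of_isCoprime (p : R) {α β : R} (h : IsCoprime α β) :
    Ideal.span {p * α * β} = Ideal.span {p * α} ⊓ Ideal.span {p * β} := by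
  ext z
  simp only [Ideal.mem_inf, Ideal.mem_span_singleton]
  refine ⟨fun hz ↦ ⟨dvd_of_mul_right_dvd hz, dvd_of_mul_right_dvd (mul_right_comm p α β ▸ hz)⟩, ?_⟩
  rintro ⟨⟨s, hs⟩, t, ht⟩
  obtain ⟨x, y, hxy⟩ := h
  exact ⟨x * t + y * s, by linear_combination (-z) * hxy + x * α * ht + y * β * hs⟩

theorem exists_mul_eq_and_span_eq_inf [IsDomain R] {A c d g p : R} (hg : g ≠ 0)
    (hp : Ideal.span {p} = Ideal.span {g, c}) (hd : d * (c * g) = A * p) :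
    ∃ l, d * l = A ∧ Ideal.span {l} = Ideal.span {g} ⊓ Ideal.span {c} := by
  obtain ⟨α, β, rfl, rfl, hcop⟩ := exists_mul_eq_and_isCoprime hg hp
  exact ⟨p * α * β, mul_right_cancel₀ (left_ne_zero_of_mul hg) (by linear_combination hd),
    span_mul_eq_inf_of_isCoprime p hcop⟩

theorem torsionOf_mk_span_mul [IsDomain R] (d : R) {x : R} (hx : x ≠ 0) :
    Ideal.torsionOf R (R ⧸ Ideal.span {d * x}) (Submodule.Quotient.mk x) = Ideal.span {d} := by
  ext r
  rw [Ideal.mem_torsionOf_iff, ← Submodule.Quotient.mk_smul, Submodule.Quotient.mk_eq_zero,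
    smul_eq_mul, Ideal.mem_span_singleton, Ideal.mem_span_singleton, mul_dvd_mul_iff_right hx]

theorem map_idealSpan_singleton {N : Type*} [AddCommGroup N] [Module R N] (f : R →ₗ[R] N) (x : R) :
    Submodule.map f (Ideal.span {x}) = Submodule.span R {f x} := by
  rw [← Ideal.submodule_span_eq, Submodule.map_span, Set.image_singleton]

theorem map_idealSpan_pair {N : Type*} [AddCommGroup N] [Module R N] (f : R →ₗ[R] N) (x y : R) :
    Submodule.map f (Ideal.span {x, y}) = Submodule.span R {f x} ⊔ Submodule.span R {f y} := by
  rw [← Ideal.submodule_span_eq, Submodule.map_span, Set.image_pair, Submodule.span_insert]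

theorem map_mkQ_inf {M : Type*} [AddCommGroup M] [Module R M] {K q : Submodule R M}
    (p : Submodule R M) (hq : K ≤ q) : (p ⊓ q).map K.mkQ = p.map K.mkQ ⊓ q.map K.mkQ := by
  rw [Submodule.map_inf_eq_map_inf_comap, Submodule.comap_map_mkQ, sup_eq_right.2 hq]

theorem span_pair_eq_span_pair_of_dvd {c g x y : R} (hg : g ∣ x)
    (hc : Ideal.span {c} = Ideal.span {x, y}) : Ideal.span {g, c} = Ideal.span {g, y} := by
  rw [Ideal.span_insert, hc, Ideal.span_insert, ← sup_assoc,
    sup_eq_left.2 (Ideal.span_singleton_le_span_singleton.2 hg), ← Ideal.span_insert]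

theorem exists_mul_eq_and_span_mkQ_eq_inf [IsDomain R] {A c d g p y : R} (hA : A ≠ 0) (hg : g ∣ A)
    (hc : Ideal.span {c} = Ideal.span {A, y}) (hp : Ideal.span {p} = Ideal.span {g, y})
    (hd : d * (c * g) = A * p) :
    ∃ l, d * l = A ∧ Submodule.span R {Submodule.mkQ (Ideal.span {A}) l} =
      Submodule.span R {Submodule.mkQ (Ideal.span {A}) g} ⊓
        Submodule.span R {Submodule.mkQ (Ideal.span {A}) y} := by
  obtain ⟨l, hdl, hl⟩ := exists_mul_eq_and_span_eq_inf (ne_zero_of_dvd_ne_zero hA hg)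
    (hp.trans (span_pair_eq_span_pair_of_dvd hg hc).symm) hd
  have hcA : c ∣ A := (dvd_and_dvd_of_span_singleton_eq_span_pair hc).1
  refine ⟨l, hdl, ?_⟩
  set π := Submodule.mkQ (Ideal.span {A})
  have hπA : π A = 0 := (Submodule.Quotient.mk_eq_zero _).2 (Ideal.mem_span_singleton_self A)
  have hπc : Submodule.map π (Ideal.span {c}) = Submodule.span R {π y} := by
    rw [hc, map_idealSpan_pair, hπA, Submodule.span_zero_singleton, bot_sup_eq]
  rw [← map_idealSpan_singleton, hl,
    map_mkQ_inf _ (Ideal.span_singleton_le_span_singleton.2 hcA), map_idealSpan_singleton, hπc]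

theorem nonempty_sumKer_mkQ_equiv_pi [IsDomain R] {n : ℕ} {a : Fin (n + 2) → R} (ha : a 0 ≠ 0)
    {g : ℕ → R} {c d : Fin n → R} (hzero : Ideal.span {g 0} = Ideal.span {a 0})
    (hsucc : ∀ k : Fin (n + 1), Ideal.span {g (k + 1)} = Ideal.span {g k, a k.succ})
    (hc : ∀ i : Fin n, Ideal.span {c i} = Ideal.span {a 0, a i.succ.succ})
    (hd : ∀ i : Fin n, d i * (c i * g (i + 1)) = a 0 * g (i + 2)) :
    Nonempty (sumKer (fun j : Fin (n + 1) ↦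
      Submodule.span R {Submodule.mkQ (Ideal.span {a 0}) (a j.succ)}) ≃ₗ[R]
        ∀ i, R ⧸ Ideal.span {d i}) := by
  set π := Submodule.mkQ (Ideal.span {a 0})
  have hdvd (k : Fin (n + 2)) : g k ∣ a 0 := by
    induction k using Fin.induction with
    | zero => exact Ideal.span_singleton_le_span_singleton.1 hzero.ge
    | succ k ih => exact (dvd_and_dvd_of_span_singleton_eq_span_pair (hsucc k)).1.trans ih
  have hπ (k : Fin (n + 1)) : Submodule.span R {π (g (k + 1))} =
      Submodule.span R {π (g k)} ⊔ Submodule.span R {π (a k.succ)} := by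
    rw [← map_idealSpan_pair, ← hsucc, map_idealSpan_singleton]
  have hπ_zero : π (g 0) = 0 :=
    (Submodule.Quotient.mk_eq_zero _).2 (hzero ▸ Ideal.mem_span_singleton_self (g 0))
  choose l hdl hl using fun i : Fin n ↦
    exists_mul_eq_and_span_mkQ_eq_inf ha (hdvd i.succ.castSucc) (hc i) (hsucc i.succ) (hd i)
  obtain ⟨e⟩ := nonempty_sumKer_equiv_pi (fun j : Fin (n + 1) ↦ Submodule.span R {π (a j.succ)})
    (fun k ↦ π (g (k + 1))) (fun i ↦ π (l i)) (by simpa [hπ_zero] using hπ 0)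
    (fun i ↦ hπ i.succ) hl
  have htorsion (i : Fin n) : Ideal.torsionOf R _ (π (l i)) = Ideal.span {d i} := by
    have hli : l i ≠ 0 := right_ne_zero_of_mul (hdl i ▸ ha)
    have := torsionOf_mk_span_mul (d i) hli
    rwa [hdl i] at this
  exact ⟨e ≪≫ₗ LinearEquiv.piCongrRight fun i ↦ Submodule.quotEquivOfEq _ _ (htorsion i)⟩

end Gcd

section Solutions

variable {R : Type*} [CommRing R] {n : ℕ}

/-- The solutions `x` of the homogeneous linear equation `∑ i, a i * x i = 0`. -/
def solutions {ι : Type*} [Fintype ι] (a : ι → R) : Submodule R (ι → R) :=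
  LinearMap.ker (∑ i, a i • (LinearMap.proj i : (ι → R) →ₗ[R] R))

theorem mem_solutions {ι : Type*} [Fintype ι] {a x : ι → R} :
    x ∈ solutions a ↔ ∑ i, a i * x i = 0 := by
  simp [solutions]

/-- The terms `a i * x i` with `i ≠ 0` of the equation `∑ i, a i * x i = 0`, modulo `a 0`. -/
def tailTerms (a : Fin (n + 1) → R) : (Fin (n + 1) → R) →ₗ[R] Fin n → R ⧸ Ideal.span {a 0} :=
  LinearMap.pi fun j ↦ Submodule.mkQ (Ideal.span {a 0}) ∘ₗ (a j.succ • LinearMap.proj j.succ)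

theorem tailTerms_apply (a x : Fin (n + 1) → R) (j : Fin n) :
    tailTerms a x j = Submodule.mkQ (Ideal.span {a 0}) (a j.succ * x j.succ) := rfl

theorem tailTerms_eq_zero_iff {a x : Fin (n + 1) → R} :
    tailTerms a x = 0 ↔ ∀ j : Fin n, a 0 ∣ a j.succ * x j.succ := by
  simp only [funext_iff, tailTerms_apply, Pi.zero_apply, Submodule.mkQ_apply,
    Submodule.Quotient.mk_eq_zero, Ideal.mem_span_singleton]

theorem map_tailTerms_solutions (a : Fin (n + 1) → R) :
    (solutions a).map (tailTerms a) =
      sumKer fun j : Fin n ↦ Submodule.span R {Submodule.mkQ (Ideal.span {a 0}) (a j.succ)} := by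
  have hterm (x : R) (j : Fin n) : Submodule.mkQ (Ideal.span {a 0}) (a j.succ * x) =
      x • Submodule.mkQ (Ideal.span {a 0}) (a j.succ) := by
    rw [← map_smul, smul_eq_mul, mul_comm]
  ext z
  simp only [Submodule.mem_map, mem_sumKer, mem_solutions, Fin.sum_univ_succ]
  constructor
  · rintro ⟨x, hx, rfl⟩
    refine ⟨fun j ↦ Submodule.mem_span_singleton.2 ⟨x j.succ, (hterm _ j).symm⟩, ?_⟩
    simp only [tailTerms_apply, ← map_sum]
    refine (Submodule.Quotient.mk_eq_zero _).2 (Ideal.mem_span_singleton.2 ⟨-x 0, ?_⟩)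
    linear_combination hx
  · rintro ⟨hz, hsum⟩
    choose y hy using fun j ↦ Submodule.mem_span_singleton.1 (hz j)
    simp only [← hy, ← hterm, ← map_sum] at hsum
    obtain ⟨r, hr⟩ := Ideal.mem_span_singleton.1 ((Submodule.Quotient.mk_eq_zero _).1 hsum)
    refine ⟨Fin.cons (-r) y, by simp [hr], funext fun j ↦ ?_⟩
    rw [tailTerms_apply, Fin.cons_succ, hterm, hy]

theorem eq_of_tail_eq_of_mem_solutions [IsDomain R] {a x y : Fin (n + 1) → R} (ha : a 0 ≠ 0)
    (hx : x ∈ solutions a) (hy : y ∈ solutions a) (htail : Fin.tail x = Fin.tail y) : x = y := by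
  have htail' (j : Fin n) : x j.succ = y j.succ := congrFun htail j
  rw [mem_solutions, Fin.sum_univ_succ] at hx hy
  simp only [htail'] at hx
  exact funext (Fin.cases (mul_left_cancel₀ ha (add_right_cancel (hx.trans hy.symm))) htail')

variable {a : Fin (n + 1) → R} {c α β : Fin n → R}

theorem cons_single_mem_solutions (hα : ∀ j, c j * α j = a 0) (hβ : ∀ j, c j * β j = a j.succ)
    (j : Fin n) : (Fin.cons (-β j) (Pi.single j (α j)) : Fin (n + 1) → R) ∈ solutions a := by
  simp only [mem_solutions, Fin.sum_univ_succ, Fin.cons_zero, Fin.cons_succ, Pi.single_apply,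
    mul_ite, mul_zero, Finset.sum_ite_eq', Finset.mem_univ, if_true]
  linear_combination β j * hα j - α j * hβ j

variable [IsDomain R]

theorem span_range_cons_single_eq (ha : a 0 ≠ 0) (hα : ∀ j, c j * α j = a 0)
    (hβ : ∀ j, c j * β j = a j.succ) (hcop : ∀ j, IsCoprime (α j) (β j)) :
    Submodule.span R (Set.range fun j ↦ (Fin.cons (-β j) (Pi.single j (α j)) : Fin (n + 1) → R)) =
      solutions a ⊓ LinearMap.ker (tailTerms a) := by
  refine le_antisymm (Submodule.span_le.2 ?_) fun x hx ↦ ?_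
  · rintro _ ⟨j, rfl⟩
    refine ⟨cons_single_mem_solutions hα hβ j, tailTerms_eq_zero_iff.2 fun k ↦ ?_⟩
    simp only [Fin.cons_succ, Pi.single_apply]
    split_ifs with hk
    · subst hk
      exact ⟨β k, by linear_combination β k * hα k - α k * hβ k⟩
    · simp
  · obtain ⟨hxS, hx0⟩ := hx
    have hdvd (j : Fin n) : α j ∣ x j.succ := by
      have hcj : c j ≠ 0 := left_ne_zero_of_mul (hα j ▸ ha)
      refine (hcop j).dvd_of_dvd_mul_left ((mul_dvd_mul_iff_left hcj).1 ?_)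
      simpa only [hα, ← mul_assoc, hβ] using tailTerms_eq_zero_iff.1 hx0 j
    choose t ht using hdvd
    have hsum : ∑ j, t j • (Fin.cons (-β j) (Pi.single j (α j)) : Fin (n + 1) → R) = x := by
      refine eq_of_tail_eq_of_mem_solutions ha (sum_mem fun j _ ↦ Submodule.smul_mem _ _
        (cons_single_mem_solutions hα hβ j)) hxS (funext fun k ↦ ?_)
      simp [Fin.tail, ht, Finset.sum_apply, Pi.single_apply, mul_comm]
    exact hsum ▸ sum_mem fun j _ ↦ Submodule.smul_mem _ _ (Submodule.subset_span ⟨j, rfl⟩)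

theorem span_range_eq_solutions_inf_ker {u : Fin n → Fin (n + 1) → R} (ha : a 0 ≠ 0)
    (hc : ∀ j, Ideal.span {c j} = Ideal.span {a 0, a j.succ})
    (hu : ∀ j, c j • u j = Fin.cons (-a j.succ) (Pi.single j (a 0))) :
    Submodule.span R (Set.range u) = solutions a ⊓ LinearMap.ker (tailTerms a) := by
  choose α β hα hβ hcop using fun j ↦ exists_mul_eq_and_isCoprime ha (hc j)
  have hu_eq : u = fun j ↦ Fin.cons (-β j) (Pi.single j (α j)) := by
    funext j
    refine smul_right_injective _ (left_ne_zero_of_mul (hα j ▸ ha)) ((hu j).trans ?_)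
    ext k
    cases k using Fin.cases with
    | zero => simp [hβ]
    | succ k => simp [Pi.single_apply, hα]
  rw [hu_eq, span_range_cons_single_eq ha hα hβ hcop]

theorem nonempty_solutions_quotient_equiv_sumKer {u : Fin n → Fin (n + 1) → R} (ha : a 0 ≠ 0)
    (hc : ∀ j, Ideal.span {c j} = Ideal.span {a 0, a j.succ})
    (hu : ∀ j, c j • u j = Fin.cons (-a j.succ) (Pi.single j (a 0))) :
    Nonempty ((solutions a ⧸ (Submodule.span R (Set.range u)).comap (solutions a).subtype) ≃ₗ[R]
      sumKer fun j : Fin n ↦ Submodule.span R {Submodule.mkQ (Ideal.span {a 0}) (a j.succ)}) := by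
  have hker : (Submodule.span R (Set.range u)).comap (solutions a).subtype =
      LinearMap.ker ((tailTerms a).domRestrict (solutions a)) := by
    ext ⟨x, hx⟩
    simp [span_range_eq_solutions_inf_ker ha hc hu]
  rw [hker, ← map_tailTerms_solutions, ← LinearMap.range_domRestrict]
  exact ⟨LinearMap.quotKerEquivRange _⟩

end Solutions

section PrimaryComponent

variable {R : Type*} [CommRing R]

/-- The `S`-torsion of a finite product is the product of the `S`-torsions. -/
def torsionPiEquiv {ι : Type*} [Fintype ι] (M : ι → Type*) [∀ i, AddCommGroup (M i)]
    [∀ i, Module R (M i)] (S : Submonoid R) :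
    Submodule.torsion' R (∀ i, M i) S ≃ₗ[R] ∀ i, Submodule.torsion' R (M i) S where
  toFun x i := ⟨x.1 i, x.2.imp fun _ hs ↦ congrFun hs i⟩
  invFun y := ⟨fun i ↦ y i, by
    classical
    choose s hs using fun i ↦ (y i).2
    refine ⟨∏ i, s i, funext fun i ↦ ?_⟩
    rw [Pi.smul_apply, ← Finset.prod_erase_mul _ _ (Finset.mem_univ i), mul_smul, hs, smul_zero]
    rfl⟩
  map_add' _ _ := rfl
  map_smul' _ _ := rfl

theorem map_torsion' {M N : Type*} [AddCommGroup M] [Module R M] [AddCommGroup N] [Module R N]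
    (e : M ≃ₗ[R] N) (S : Submonoid R) :
    (Submodule.torsion' R M S).map (e : M →ₗ[R] N) = Submodule.torsion' R N S := by
  ext y
  simp only [Submodule.mem_map_equiv, Submodule.mem_torsion'_iff, Submonoid.smul_def, ← map_smul,
    LinearEquiv.map_eq_zero_iff]

theorem mem_torsion'_powers_iff {M : Type*} [AddCommGroup M] [Module R M] {q : R} {x : M} :
    x ∈ Submodule.torsion' R M (Submonoid.powers q) ↔ ∃ s : ℕ, q ^ s • x = 0 := by
  simp [Submodule.mem_torsion'_iff, Submonoid.mem_powers_iff]

theorem torsion'_powers_quotient_span {q f : R} (h : IsCoprime q f) (k : ℕ) :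
    Submodule.torsion' R (R ⧸ Ideal.span {q ^ k * f}) (Submonoid.powers q) =
      Submodule.span R {Submodule.Quotient.mk f} := by
  ext x
  obtain ⟨x, rfl⟩ := Submodule.Quotient.mk_surjective _ x
  rw [mem_torsion'_powers_iff, Submodule.mem_span_singleton]
  constructor
  · rintro ⟨s, hs⟩
    have hdvd : f ∣ q ^ s * x := dvd_of_mul_left_dvd (Ideal.mem_span_singleton.1
      ((Submodule.Quotient.mk_eq_zero _).1 hs))
    obtain ⟨r, rfl⟩ := h.symm.pow_right.dvd_of_dvd_mul_left hdvd
    exact ⟨r, congrArg Submodule.Quotient.mk (mul_comm r f)⟩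
  · rintro ⟨r, hr⟩
    refine ⟨k, ?_⟩
    rw [← hr, smul_comm, ← Submodule.Quotient.mk_smul, smul_eq_mul,
      (Submodule.Quotient.mk_eq_zero _).2 (Ideal.mem_span_singleton_self _), smul_zero]

theorem nonempty_torsion'_powers_quotient_span_equiv [IsDomain R] {q f : R} (h : IsCoprime q f)
    (hf : f ≠ 0) (k : ℕ) :
    Nonempty (Submodule.torsion' R (R ⧸ Ideal.span {q ^ k * f}) (Submonoid.powers q) ≃ₗ[R]
      R ⧸ Ideal.span {q ^ k}) := by
  rw [torsion'_powers_quotient_span h]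
  exact ⟨(Ideal.quotTorsionOfEquivSpanSingleton R _ _).symm ≪≫ₗ
    Submodule.quotEquivOfEq _ _ (torsionOf_mk_span_mul _ hf)⟩

theorem nonempty_torsion'_powers_equiv_pi [IsDomain R] [IsPrincipalIdealRing R]
    {ι M : Type*} [Finite ι] [AddCommGroup M] [Module R M] {d : ι → R} (hd : ∀ i, d i ≠ 0)
    (e : M ≃ₗ[R] ∀ i, R ⧸ Ideal.span {d i}) {q : R} (hq : Prime q) :
    Nonempty (Submodule.torsion' R M (Submonoid.powers q) ≃ₗ[R]
      ∀ i, R ⧸ Ideal.span {q ^ multiplicity q (d i)}) := by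
  have hcyclic (i : ι) : Nonempty (Submodule.torsion' R (R ⧸ Ideal.span {d i})
      (Submonoid.powers q) ≃ₗ[R] R ⧸ Ideal.span {q ^ multiplicity q (d i)}) := by
    obtain ⟨f, hdf, hqf⟩ :=
      (FiniteMultiplicity.of_prime_left hq (hd i)).exists_eq_pow_mul_and_not_dvd
    have hf : f ≠ 0 := by rintro rfl; exact hqf (dvd_zero q)
    have := nonempty_torsion'_powers_quotient_span_equiv
      (hq.irreducible.coprime_iff_not_dvd.2 hqf) hf (multiplicity q (d i))
    rwa [← hdf] at this
  cases nonempty_fintype ι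
  exact ⟨e.submoduleMap _ ≪≫ₗ LinearEquiv.ofEq _ _ (map_torsion' e _) ≪≫ₗ torsionPiEquiv _ _ ≪≫ₗ
    LinearEquiv.piCongrRight fun i ↦ (hcyclic i).some⟩

end PrimaryComponent

section PrefixIdeal

variable {R : Type*} [CommRing R] {n : ℕ}

/-- The ideal generated by the entries of `a` with index at most `t`; its generators are the
greatest common divisors of these entries. -/
def prefixIdeal (a : Fin (n + 1) → R) (t : ℕ) : Ideal R :=
  Ideal.span {x | ∃ i : Fin (n + 1), (i : ℕ) ≤ t ∧ x = a i}

theorem mem_prefixIdeal (a : Fin (n + 1) → R) {i : Fin (n + 1)} {t : ℕ} (hit : (i : ℕ) ≤ t) :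
    a i ∈ prefixIdeal a t :=
  Ideal.subset_span ⟨i, hit, rfl⟩

theorem prefixIdeal_zero (a : Fin (n + 1) → R) : prefixIdeal a 0 = Ideal.span {a 0} := by
  simp [prefixIdeal]

theorem prefixIdeal_succ (a : Fin (n + 1) → R) (k : Fin n) :
    prefixIdeal a (k + 1) = prefixIdeal a k ⊔ Ideal.span {a k.succ} := by
  have hle (i : Fin (n + 1)) : (i : ℕ) ≤ k + 1 ↔ (i : ℕ) ≤ k ∨ i = k.succ := by
    rw [Fin.ext_iff, Fin.val_succ]
    lia
  rw [prefixIdeal, prefixIdeal, ← Ideal.span_union]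
  congr 1
  ext x
  simp only [hle, Set.mem_ofPred_eq, Set.mem_union, Set.mem_singleton_iff, or_and_right, exists_or,
    exists_eq_left]

end PrefixIdeal

theorem nonempty_solutions_quotient_equiv_pi {R : Type*} [CommRing R] [IsDomain R] {n : ℕ}
    {a : Fin (n + 2) → R} (ha : a 0 ≠ 0) {c : Fin (n + 1) → R}
    (hc : ∀ j, Ideal.span {c j} = Ideal.span {a 0, a j.succ}) {u : Fin (n + 1) → Fin (n + 2) → R}
    (hu : ∀ j, c j • u j = Fin.cons (-a j.succ) (Pi.single j (a 0))) {g : ℕ → R}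
    (hg : ∀ t, Ideal.span {g t} = prefixIdeal a t) {d : Fin n → R}
    (hd : ∀ i : Fin n, d i * (c i.succ * g (i + 1)) = a 0 * g (i + 2)) :
    Nonempty ((solutions a ⧸ (Submodule.span R (Set.range u)).comap (solutions a).subtype) ≃ₗ[R]
      ∀ i, R ⧸ Ideal.span {d i}) := by
  obtain ⟨e⟩ := nonempty_solutions_quotient_equiv_sumKer ha hc hu
  have hsucc (k : Fin (n + 1)) : Ideal.span {g (k + 1)} = Ideal.span {g k, a k.succ} := by
    rw [hg, prefixIdeal_succ, ← hg, Ideal.span_insert]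
  obtain ⟨f⟩ := nonempty_sumKer_mkQ_equiv_pi ha ((hg 0).trans (prefixIdeal_zero a)) hsucc
    (fun i ↦ hc i.succ) hd
  exact ⟨e ≪≫ₗ f⟩

theorem stmt_18_general {R : Type*} [CommRing R] [IsDomain R] [IsPrincipalIdealRing R]
    {m : ℕ} (a : Fin (m + 2) → R) (ha1 : a 0 ≠ 0)
    (S : Submodule R (Fin (m + 2) → R))
    (hS : ∀ x, x ∈ S ↔ ∑ i, a i * x i = 0)
    (v : Fin (m + 1) → Fin (m + 2) → R)
    (hv : ∀ j k, v j k = if k = 0 then -a j.succ else if k = j.succ then a 0 else 0)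
    (c : Fin (m + 1) → R) (hc : ∀ j, Ideal.span {c j} = Ideal.span {a 0, a j.succ})
    (u : Fin (m + 1) → Fin (m + 2) → R)
    (hu : ∀ j, c j • u j = v j)
    (U1 : Submodule R (Fin (m + 2) → R))
    (hU1 : U1 = Submodule.span R (Set.range u))
    (g : ℕ → R)
    (hg : ∀ t, Ideal.span {g t} =
      Ideal.span {x | ∃ i : Fin (m + 2), (i : ℕ) ≤ t ∧ x = a i})
    (d : Fin m → R)
    (hd : ∀ i : Fin m, d i * (c i.succ * g ((i : ℕ) + 1)) = a 0 * g ((i : ℕ) + 2)) :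
    Nonempty ((S ⧸ Submodule.comap S.subtype U1) ≃ₗ[R]
      ((i : Fin m) → R ⧸ Ideal.span {d i})) ∧
    ∀ q : R, Prime q →
      ∀ P : Submodule R (S ⧸ Submodule.comap S.subtype U1),
        (∀ x, x ∈ P ↔ ∃ s : ℕ, q ^ s • x = 0) →
        ∃ k : Fin m → ℕ, (∀ i, q ^ k i ∣ d i ∧ ¬ q ^ (k i + 1) ∣ d i) ∧
          Nonempty (P ≃ₗ[R] ((i : Fin m) → R ⧸ Ideal.span {q ^ k i})) := by
  obtain rfl : S = solutions a := Submodule.ext fun x ↦ (hS x).trans mem_solutions.symm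
  subst hU1
  have hu_cons (j : Fin (m + 1)) : c j • u j = Fin.cons (-a j.succ) (Pi.single j (a 0)) := by
    rw [hu]
    ext k
    cases k using Fin.cases <;> simp [hv, Pi.single_apply]
  obtain ⟨e⟩ := nonempty_solutions_quotient_equiv_pi ha1 hc hu_cons hg hd
  have hd_ne_zero (i : Fin m) : d i ≠ 0 := by
    have hdvd : g (i + 2) ∣ a 0 :=
      Ideal.mem_span_singleton.1 (hg (i + 2) ▸ mem_prefixIdeal a (Nat.zero_le _))
    exact left_ne_zero_of_mul (hd i ▸ mul_ne_zero ha1 (ne_zero_of_dvd_ne_zero ha1 hdvd))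
  refine ⟨⟨e⟩, fun q hq P hP ↦ ⟨fun i ↦ multiplicity q (d i), fun i ↦ ?_, ?_⟩⟩
  · exact ⟨pow_multiplicity_dvd q (d i), (FiniteMultiplicity.of_prime_left hq
      (hd_ne_zero i)).not_pow_dvd_of_multiplicity_lt (Nat.lt_succ_self _)⟩
  · rw [show P = Submodule.torsion' R _ (Submonoid.powers q) from
      Submodule.ext fun x ↦ (hP x).trans mem_torsion'_powers_iff.symm]
    exact nonempty_torsion'_powers_equiv_pi hd_ne_zero e hq

/-- Theorem `S/U_1`: with `dᵢ = a₁(a₁,…,a_{i+1})/((a₁,a_{i+1})(a₁,…,aᵢ))`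
for `2 ≤ i ≤ n−1`, one has `S/U₁ ≅ R/Rd₂ ⊕ ⋯ ⊕ R/Rd_{n−1}`; moreover for
every prime `q` of `R`, the `q`-elementary divisors of `S/U₁` (i.e. the
elementary divisors of its `q`-primary component) are the `q`-parts of
`d₂,…,d_{n−1}`. Here `n = m + 2`; `v j = v(1, j+2)` and `u j = u(1, j+2)`
for `j : Fin (m+1)`, `c j` is a gcd of `a₁` and `a_{j+2}`, `g t` is a gcd of
`a₁,…,a_{t+1}`, and `d i` (paper index `i+2`) is defined by the
exact-division identity
`d i · ((a₁,a_{i+3})·(a₁,…,a_{i+2})) = a₁·(a₁,…,a_{i+3})`. -/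
theorem stmt_18 {R : Type*} [CommRing R] [IsDomain R] [IsPrincipalIdealRing R]
    {m : ℕ} (hm : 1 ≤ m) (a : Fin (m + 2) → R)
    (huni : Ideal.span (Set.range a) = ⊤) (ha1 : a 0 ≠ 0)
    (S : Submodule R (Fin (m + 2) → R))
    (hS : ∀ x, x ∈ S ↔ ∑ i, a i * x i = 0)
    (v : Fin (m + 1) → Fin (m + 2) → R)
    (hv : ∀ j k, v j k = if k = 0 then -a j.succ else if k = j.succ then a 0 else 0)
    (c : Fin (m + 1) → R) (hc : ∀ j, Ideal.span {c j} = Ideal.span {a 0, a j.succ})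
    (u : Fin (m + 1) → Fin (m + 2) → R)
    (hu : ∀ j, c j • u j = v j)
    (U1 : Submodule R (Fin (m + 2) → R))
    (hU1 : U1 = Submodule.span R (Set.range u))
    (g : ℕ → R)
    (hg : ∀ t, Ideal.span {g t} =
      Ideal.span {x | ∃ i : Fin (m + 2), (i : ℕ) ≤ t ∧ x = a i})
    (d : Fin m → R)
    (hd : ∀ i : Fin m, d i * (c i.succ * g ((i : ℕ) + 1)) = a 0 * g ((i : ℕ) + 2)) :
    Nonempty ((S ⧸ Submodule.comap S.subtype U1) ≃ₗ[R]
      ((i : Fin m) → R ⧸ Ideal.span {d i})) ∧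
    ∀ q : R, Prime q →
      ∀ P : Submodule R (S ⧸ Submodule.comap S.subtype U1),
        (∀ x, x ∈ P ↔ ∃ s : ℕ, q ^ s • x = 0) →
        ∃ k : Fin m → ℕ, (∀ i, q ^ k i ∣ d i ∧ ¬ q ^ (k i + 1) ∣ d i) ∧
          Nonempty (P ≃ₗ[R] ((i : Fin m) → R ⧸ Ideal.span {q ^ k i})) :=
  stmt_18_general a ha1 S hS v hv c hc u hu U1 hU1 g hg d hd
end
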